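/- Let A be the 3×3 integer matrix with rows (−1,1,0), (−1,0,1), (1,0,0). For every arithmetic progression, i.e., for all integers a ≥ 1 and b ≥ 0, there are infinitely many N with N ≡ b (mod a) such that the (1,1) entry of A^N is strictly positive. -/

import Mathlib

open Matrix

lemma aux_root : ∃ α : ℝ, 0 < α ∧ α < 1 ∧ α^3 + α^2 + α - 1 = 0 := by
  have hc : ContinuousOn (fun x : ℝ => x^3 + x^2 + x - 1) (Set.Icc 0 1) := by fun_prop
  have h := intermediate_value_Ioo (by norm_num : (0:ℝ) ≤ 1) hc
  have h0 : (0:ℝ) ∈ Set.Ioo ((fun x : ℝ => x^3 + x^2 + x - 1) 0) ((fun x : ℝ => x^3 + x^2 + x - 1) 1) := by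
    constructor <;> norm_num
  obtain ⟨x, hx, hx2⟩ := h h0
  exact ⟨x, hx.1, hx.2, hx2⟩

lemma aux_irr (α : ℝ) (h0 : 0 < α) (h1 : α < 1) (h : α^3 + α^2 + α - 1 = 0) (y z : ℤ)
    (hyz : (y:ℝ) = z * α) : z = 0 := by
  by_contra hz
  have hzr : (z:ℝ) ≠ 0 := by exact_mod_cast hz
  have hI : IsIntegral ℤ α := by
    refine ⟨Polynomial.X^3 + Polynomial.X^2 + Polynomial.X - 1, by monicity!, ?_⟩
    simpa using h
  have hq : ((y / z : ℚ) : ℝ) = α := by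
    push_cast; rw [hyz]; field_simp
  have hI2 : IsIntegral ℤ (y / z : ℚ) := by
    rw [← hq] at hI
    exact (isIntegral_algebraMap_iff (algebraMap ℚ ℝ).injective).1 hI
  obtain ⟨k, hk⟩ := IsIntegrallyClosed.isIntegral_iff.1 hI2
  have hk' : (k:ℝ) = α := by
    rw [← hq, ← hk]; simp
  rw [← hk'] at h0 h1
  have : 0 < k := by exact_mod_cast h0
  have : k < 1 := by exact_mod_cast h1
  omega

lemma aux_pow (n : ℕ) : ∃ x y z : ℤ, ∀ l : ℂ, l^3 + l^2 + l - 1 = 0 → l^n = x + y * l + z * l^2 := by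
  induction n with
  | zero => exact ⟨1, 0, 0, by intros; simp⟩
  | succ n ih =>
    obtain ⟨x, y, z, h⟩ := ih
    refine ⟨z, x - z, y - z, fun l hl => ?_⟩
    rw [pow_succ, h l hl]; push_cast
    linear_combination (z:ℂ) * hl

lemma aux_double (g : ℂ) (hg : g.im ≠ 0) : ∃ m : ℕ, 1 ≤ m ∧ (g^m).re ≤ 0 := by
  by_contra! hcon
  have hg0 : g ≠ 0 := by rintro rfl; simp at hg
  have hn : 0 < ‖g‖ := norm_pos_iff.2 hg0
  have hlt : g.re < ‖g‖ := by
    refine lt_of_le_of_ne (Complex.re_le_norm g) fun h => hg ?_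
    have := Complex.sq_norm g
    rw [Complex.normSq_apply, ← h] at this
    have : g.im * g.im = 0 := by linarith
    simpa using this
  have key : ∀ j : ℕ, 2^j * ((‖g‖ - g.re) / ‖g‖) * ‖g^(2^j)‖ ≤ ‖g^(2^j)‖ - (g^(2^j)).re := by
    intro j
    induction j with
    | zero => simp; field_simp; simp
    | succ j ih =>
      have hp := hcon (2^j) Nat.one_le_two_pow
      rw [pow_succ (2:ℕ) j, pow_mul]
      set w := g^(2^j) with hw
      have h1 := Complex.sq_norm w
      rw [Complex.normSq_apply] at h1
      have h2 : (w^2).re = w.re * w.re - w.im * w.im := by rw [pow_two, Complex.mul_re]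
      rw [h2, norm_pow, pow_succ (2:ℝ) j]
      have h3 := mul_le_mul_of_nonneg_right ih (norm_nonneg w)
      have h4 := Complex.re_le_norm w
      nlinarith [mul_nonneg hp.le (sub_nonneg.2 h4)]
  have he : 0 < (‖g‖ - g.re) / ‖g‖ := div_pos (by linarith) hn
  obtain ⟨j, hj⟩ := pow_unbounded_of_one_lt (1 / ((‖g‖ - g.re) / ‖g‖)) (one_lt_two : (1:ℝ) < 2)
  have h1 := key j
  have hp := hcon (2^j) Nat.one_le_two_pow
  have hN : 0 < ‖g^(2^j)‖ := norm_pos_iff.2 (pow_ne_zero _ hg0)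
  rw [div_lt_iff₀ he] at hj
  nlinarith [mul_lt_mul_of_pos_right hj hN]

lemma aux_rec (N : ℕ) :
    ((!![-1, 1, 0; -1, 0, 1; 1, 0, 0] : Matrix (Fin 3) (Fin 3) ℤ) ^ (N+3)) =
    - (!![-1, 1, 0; -1, 0, 1; 1, 0, 0] : Matrix (Fin 3) (Fin 3) ℤ) ^ (N+2)
    - (!![-1, 1, 0; -1, 0, 1; 1, 0, 0] : Matrix (Fin 3) (Fin 3) ℤ) ^ (N+1)
    + (!![-1, 1, 0; -1, 0, 1; 1, 0, 0] : Matrix (Fin 3) (Fin 3) ℤ) ^ N := by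
  have h : (!![-1, 1, 0; -1, 0, 1; 1, 0, 0] : Matrix (Fin 3) (Fin 3) ℤ) ^ 3 =
    - (!![-1, 1, 0; -1, 0, 1; 1, 0, 0] : Matrix (Fin 3) (Fin 3) ℤ) ^ 2
    - (!![-1, 1, 0; -1, 0, 1; 1, 0, 0] : Matrix (Fin 3) (Fin 3) ℤ) ^ 1 + 1 := by decide
  rw [pow_add _ N 3, h, pow_add _ N 2, pow_add _ N 1]
  noncomm_ring

lemma aux_closed (s : ℕ → ℤ) (h0 : s 0 = 1) (h1 : s 1 = -1) (h2 : s 2 = 0)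
    (hr : ∀ N, s (N+3) = - s (N+2) - s (N+1) + s N) (α β β' : ℂ)
    (hab : α ≠ β) (hab' : α ≠ β') (hbb : β ≠ β') (e1 : α + β + β' = -1)
    (e2 : α * β + α * β' + β * β' = 1) (e3 : α * β * β' = 1) :
    ∃ C D E : ℂ, C ≠ 0 ∧ ∀ N, (s N : ℂ) = C * β^N + D * β'^N + E * α^N := by
  have n1 : β - β' ≠ 0 := sub_ne_zero.2 hbb
  have n2 : β - α ≠ 0 := sub_ne_zero.2 hab.symm
  have n3 : β' - α ≠ 0 := sub_ne_zero.2 hab'.symm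
  have hb0 : β ≠ 0 := by rintro rfl; simp at e3
  have r1 : α^3 = - α^2 - α + 1 := by linear_combination α^2 * e1 - α * e2 + e3
  have r2 : β^3 = - β^2 - β + 1 := by linear_combination β^2 * e1 - β * e2 + e3
  have r3 : β'^3 = - β'^2 - β' + 1 := by linear_combination β'^2 * e1 - β' * e2 + e3
  refine ⟨(β' + α + β' * α) / ((β - β') * (β - α)), -(β + α + β * α) / ((β - β') * (β' - α)),
    (β + β' + β * β') / ((β - α) * (β' - α)), ?_, ?_⟩
  · have : β' + α + β' * α = β^2 := by linear_combination e1 * (1 - β) + e2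
    rw [this]
    exact div_ne_zero (pow_ne_zero _ hb0) (mul_ne_zero n1 n2)
  · intro N
    induction N using Nat.strong_induction_on with
    | _ N ih =>
    match N, ih with
    | 0, _ => rw [h0]; push_cast; field_simp; ring
    | 1, _ => rw [h1]; push_cast; field_simp; ring
    | 2, _ => rw [h2]; push_cast; field_simp; ring
    | N+3, ih =>
      rw [hr]; push_cast
      rw [ih (N+2) (by omega), ih (N+1) (by omega), ih N (by omega), pow_add β N 3,
        pow_add β' N 3, pow_add α N 3, r1, r2, r3]
      ring

/-- Along every arithmetic progression there are infinitely many `N` with the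
`(1,1)` entry of `A^N` strictly positive, where `A` is the matrix of the monomial
map `(x,y,z) ↦ (y/x, z/x, x)`. -/
theorem entry_pos_infinitely_often (a : ℕ) (ha : 1 ≤ a) (b : ℕ) :
    ∀ M : ℕ, ∃ N : ℕ, M ≤ N ∧ N % a = b % a ∧
      0 < (((!![-1, 1, 0; -1, 0, 1; 1, 0, 0] : Matrix (Fin 3) (Fin 3) ℤ) ^ N) 0 0) := by
  intro M
  by_contra! hcon
  obtain ⟨α, hα0, hα1, hα⟩ := aux_root
  have hΔ : 0 < 4 / α - (1 + α)^2 := by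
    have : 4 < 4 / α := by rw [lt_div_iff₀ hα0]; linarith
    nlinarith
  obtain ⟨t, ht0, ht⟩ : ∃ t : ℝ, 0 < t ∧ t^2 = 4 / α - (1 + α)^2 :=
    ⟨√(4 / α - (1 + α)^2), Real.sqrt_pos.2 hΔ, Real.sq_sqrt hΔ.le⟩
  obtain ⟨β, hβ⟩ : ∃ β : ℂ, β = ⟨-(1+α)/2, t/2⟩ := ⟨_, rfl⟩
  have hβim : β.im ≠ 0 := by rw [hβ]; simp; exact ht0.ne'
  set β' : ℂ := (starRingEnd ℂ) β with hβ'
  have e1 : (α:ℂ) + β + β' = -1 := by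
    rw [hβ', hβ]; apply Complex.ext <;> simp; ring
  have hbb : β * β' = ((1/α : ℝ) : ℂ) := by
    rw [hβ', Complex.mul_conj, hβ, Complex.normSq_apply]
    congr 1
    have : (4 / α) = 4 * (1/α) := by ring
    simp only; nlinarith
  have e3 : (α:ℂ) * β * β' = 1 := by
    rw [mul_assoc, hbb, ← Complex.ofReal_mul, mul_one_div_cancel hα0.ne']; simp
  have e2 : (α:ℂ) * β + α * β' + β * β' = 1 := by
    have h : (α:ℂ) * β + α * β' + β * β' = ((α * (-1-α) + 1/α : ℝ) : ℂ) := by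
      rw [hbb]; push_cast; linear_combination (α:ℂ) * e1
    rw [h, ← Complex.ofReal_one]
    congr 1
    field_simp
    linarith
  have hbne : β ≠ β' := by
    intro h
    exact hβim (Complex.conj_eq_iff_im.1 h.symm)
  have hab : (α:ℂ) ≠ β := by
    rintro h; rw [← h] at hβim; simp at hβim
  have hab' : (α:ℂ) ≠ β' := by
    intro h; apply hab
    have := congrArg (starRingEnd ℂ) h
    simpa [hβ'] using this
  have r1 : (α:ℂ)^3 + α^2 + α - 1 = 0 := by exact_mod_cast hα
  have r2 : β^3 + β^2 + β - 1 = 0 := by linear_combination β^2 * e1 - β * e2 + e3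
  have r3 : β'^3 + β'^2 + β' - 1 = 0 := by linear_combination β'^2 * e1 - β' * e2 + e3
  have hβ0 : β ≠ 0 := by rintro h; rw [h] at hβim; simp at hβim
  have hnr : ∀ n : ℕ, 1 ≤ n → (β^n).im ≠ 0 := by
    intro n hn him
    obtain ⟨x, y, z, hxyz⟩ := aux_pow n
    have hc : β'^n = β^n := by
      rw [hβ', ← map_pow]; exact Complex.conj_eq_iff_im.2 him
    rw [hxyz _ r2, hxyz _ r3] at hc
    have h1 : (β - β') * ((y - z : ℂ) - z * α) = 0 := by
      linear_combination -hc - (β - β') * z * e1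
    have h2 : (y - z : ℂ) - z * α = 0 := (mul_eq_zero.1 h1).resolve_left (sub_ne_zero.2 hbne)
    have h3 : ((y - z : ℤ) : ℝ) = z * α := by
      have : (((y - z : ℤ) : ℝ) : ℂ) = ((z * α : ℝ) : ℂ) := by
        push_cast; linear_combination h2
      exact_mod_cast this
    have hz := aux_irr α hα0 hα1 hα _ _ h3
    have hy : y = 0 := by
      rw [hz] at h3; simp at h3; exact_mod_cast h3
    have h4 := hxyz _ r1
    rw [hz, hy] at h4
    have h5 : α^n = (x:ℝ) := by
      have : ((α^n : ℝ) : ℂ) = ((x:ℝ) : ℂ) := by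
        push_cast; linear_combination h4
      exact_mod_cast this
    have h6 : 0 < α^n := pow_pos hα0 n
    have h7 : α^n < 1 := pow_lt_one₀ hα0.le hα1 (by omega)
    rw [h5] at h6 h7
    have : 0 < x := by exact_mod_cast h6
    have : x < 1 := by exact_mod_cast h7
    omega
  obtain ⟨m, hm1, hm⟩ := aux_double (β^a) (hnr a ha)
  rw [← pow_mul] at hm
  obtain ⟨n, hn⟩ : ∃ n, n = a * m := ⟨_, rfl⟩
  have hn1 : 1 ≤ n := by rw [hn]; exact Nat.mul_pos ha hm1
  rw [← hn] at hm
  obtain ⟨s, hs⟩ : ∃ s : ℕ → ℤ, s = fun N =>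
    (((!![-1, 1, 0; -1, 0, 1; 1, 0, 0] : Matrix (Fin 3) (Fin 3) ℤ) ^ N) 0 0) := ⟨_, rfl⟩
  have hs' : ∀ N, (((!![-1, 1, 0; -1, 0, 1; 1, 0, 0] : Matrix (Fin 3) (Fin 3) ℤ) ^ N) 0 0) = s N := by
    intro N; rw [hs]
  obtain ⟨C, D, E, hC, hcl⟩ := aux_closed s (by rw [hs]; decide) (by rw [hs]; decide)
    (by rw [hs]; decide) (by intro N; rw [hs]; simp only [aux_rec]; simp) α β β' hab hab' hbne e1 e2 e3
  have hle : ∀ k, M ≤ k → s (n * k + b) ≤ 0 := by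
    intro k hk
    rw [← hs']
    apply hcon
    · nlinarith
    · rw [hn, mul_assoc, Nat.mul_add_mod]
  clear hcon hs' hs
  obtain ⟨γ, hγ⟩ : ∃ γ, γ = β^n := ⟨_, rfl⟩
  obtain ⟨γ', hγ'⟩ : ∃ γ', γ' = β'^n := ⟨_, rfl⟩
  obtain ⟨δ, hδ⟩ : ∃ δ, δ = α^n := ⟨_, rfl⟩
  have hδ0 : 0 < δ := hδ ▸ pow_pos hα0 n
  have hδ1 : δ < 1 := hδ ▸ pow_lt_one₀ hα0.le hα1 (by omega)
  have hγc : γ' = (starRingEnd ℂ) γ := by rw [hγ', hγ, hβ', map_pow]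
  have hγim : γ.im ≠ 0 := hγ ▸ hnr n hn1
  have hγne : γ ≠ γ' := by
    intro h; rw [hγc] at h; exact hγim (Complex.conj_eq_iff_im.1 h.symm)
  have hγδ : γ ≠ δ := by
    rintro h; rw [h] at hγim; simp at hγim
  rw [← hγ] at hm
  have hcl2 : ∀ k, (s (n * k + b) : ℂ) = C * β^b * γ^k + D * β'^b * γ'^k + E * (α:ℂ)^b * (δ:ℂ)^k := by
    intro k
    rw [hcl, hγ, hγ', hδ]; push_cast
    rw [← pow_mul, ← pow_mul, ← pow_mul]; ring
  have hq : 0 < Complex.normSq γ := Complex.normSq_pos.2 (by rintro h; rw [h] at hγim; simp at hγim)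
  have hsum : γ + γ' = ((2 * γ.re : ℝ) : ℂ) := by rw [hγc, Complex.add_conj]
  have hprod : γ * γ' = (Complex.normSq γ : ℂ) := by rw [hγc, Complex.mul_conj]
  obtain ⟨K, hK⟩ : ∃ K : ℝ, K = ‖E * (α:ℂ)^b * ((δ:ℂ)-γ) * ((δ:ℂ) - γ')‖ := ⟨_, rfl⟩
  have hbound : ∀ k, M ≤ k → Complex.normSq γ * |(s (n * k + b) : ℝ)| ≤ K * δ^k := by
    intro k hk
    have h1 : (((s (n * (k+2) + b) : ℝ) - 2 * γ.re * (s (n * (k+1) + b) : ℝ)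
        + Complex.normSq γ * (s (n * k + b) : ℝ) : ℝ) : ℂ)
        = E * (α:ℂ)^b * ((δ:ℂ)-γ) * ((δ:ℂ) - γ') * (δ:ℂ)^k := by
      have : (((s (n * (k+2) + b) : ℝ) - 2 * γ.re * (s (n * (k+1) + b) : ℝ)
        + Complex.normSq γ * (s (n * k + b) : ℝ) : ℝ) : ℂ) =
        (s (n * (k+2) + b) : ℂ) - (γ + γ') * (s (n * (k+1) + b) : ℂ)
        + γ * γ' * (s (n * k + b) : ℂ) := by
        rw [hsum, hprod]; push_cast; ring
      rw [this, hcl2, hcl2, hcl2]; ring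
    have h2 := congrArg norm h1
    rw [norm_mul, ← hK, Complex.norm_real, norm_pow, Complex.norm_real, Real.norm_eq_abs,
      Real.norm_eq_abs, abs_of_pos hδ0] at h2
    rw [← h2]
    have i0 : (s (n * k + b) : ℝ) ≤ 0 := by exact_mod_cast hle k hk
    have i1 : (s (n * (k+1) + b) : ℝ) ≤ 0 := by exact_mod_cast hle (k+1) (by omega)
    have i2 : (s (n * (k+2) + b) : ℝ) ≤ 0 := by exact_mod_cast hle (k+2) (by omega)
    rw [abs_of_nonpos i0]
    refine le_trans ?_ (neg_le_abs _)
    nlinarith [mul_nonneg_of_nonpos_of_nonpos hm i1]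
  have hlim : Filter.Tendsto (fun k : ℕ => K * δ^k) Filter.atTop (nhds 0) := by
    simpa using (tendsto_pow_atTop_nhds_zero_of_lt_one hδ0.le hδ1).const_mul K
  obtain ⟨k0, hk0⟩ := Filter.eventually_atTop.1 (hlim.eventually (gt_mem_nhds hq))
  have hzero : ∀ k, max M k0 ≤ k → s (n * k + b) = 0 := by
    intro k hk
    have h1 := hbound k (le_trans (le_max_left _ _) hk)
    have h2 := hk0 k (le_trans (le_max_right _ _) hk)
    have h3 : |(s (n * k + b) : ℝ)| < 1 := by
      by_contra! h
      nlinarith [mul_le_mul_of_nonneg_left h hq.le]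
    have h4 : |s (n * k + b)| < 1 := by exact_mod_cast h3
    exact Int.abs_lt_one_iff.1 h4
  obtain ⟨k, hk⟩ : ∃ k, k = max M k0 := ⟨_, rfl⟩
  have z0 := hcl2 k
  have z1 := hcl2 (k+1)
  have z2 := hcl2 (k+2)
  rw [hzero _ (by omega)] at z0 z1 z2
  have hfin : C * β^b * γ^k * (γ - γ') * (γ - δ) = 0 := by
    push_cast at z0 z1 z2
    linear_combination -z2 + (γ' + δ) * z1 - γ' * δ * z0
  have hγ0 : γ ≠ 0 := by rw [hγ]; exact pow_ne_zero _ hβ0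
  exact mul_ne_zero (mul_ne_zero (mul_ne_zero (mul_ne_zero hC (pow_ne_zero _ hβ0)) (pow_ne_zero _ hγ0))
    (sub_ne_zero.2 hγne)) (sub_ne_zero.2 hγδ) hfin
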